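/- Let ω = e^{2πi/3} and let S be the span of the six 3 × 4 complex matrices S₁ = [[0,0,0,0],[1,0,0,0],[0,−1,0,0]], S₂ = [[1,0,0,0],[0,ω²,0,0],[0,0,ω,0]], S₃ = [[0,1,0,0],[0,0,1,0],[0,0,0,1]], S₄ = [[0,1,0,0],[0,0,ω,0],[0,0,0,ω²]], S₅ = [[0,0,1,0],[0,0,0,1],[0,0,0,0]], S₆ = [[0,0,0,1],[0,0,0,0],[1,0,0,0]]. Then S contains no nonzero matrix of rank at most 1. -/

import Mathlib

open Matrix

/-!
The span `S` lies in the solution space of six linear equations, each of which relates entries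
`M i j` with the same value of `j - i` modulo `5`. Suppose that `M` solves them and has rank at most
one, and let `b` be its top left entry. If `b` were nonzero, three of the `2 × 2` minors would make
the superdiagonal a multiple of `(1, -ω, ω²)`; its linear equation `(1, ω, ω²) ⬝ x = 0` then forces
it to vanish, since `1 - ω² + ω⁴ = -2ω²`, and the central minor gives `ω³ b² = 0`. Once `b = 0`,
three minors turn into `x² = 0` for the entries `x` off the main diagonal and the superdiagonal, and
three more say that the superdiagonal entries have vanishing pairwise products, so that multiplying
their linear equation by any one of them kills it.
-/

section Minors

variable {R m n k : Type*} [CommRing R] [IsDomain R] [Fintype n] [Fintype k] [DecidableEq k]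

lemma det_submatrix_eq_zero_of_rank_lt {M : Matrix m n R} (hM : M.rank < Fintype.card k)
    (r : k → m) (c : k → n) : (M.submatrix r c).det = 0 := by
  by_contra hdet
  have hle : (M.submatrix r c).rank ≤ M.rank := rank_submatrix_le M r c
  rw [rank_of_det_ne_zero hdet] at hle
  exact hle.not_gt hM

lemma mul_eq_mul_of_rank_le_one {M : Matrix m n R} (hM : M.rank ≤ 1) (i j : m) (k l : n) :
    M i k * M j l = M i l * M j k := by
  have hcard : M.rank < Fintype.card (Fin 2) := by
    rw [Fintype.card_fin]
    exact Nat.lt_succ_of_le hM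
  have hdet := det_submatrix_eq_zero_of_rank_lt hcard ![i, j] ![k, l]
  rw [det_fin_two] at hdet
  exact sub_eq_zero.mp hdet

end Minors

lemma eq_zero_of_sum_mul_eq_zero_of_pairwise {ι R : Type*} [Fintype ι]
    [NonUnitalNonAssocSemiring R] [NoZeroDivisors R] {c x : ι → R} (hc : ∀ i, c i ≠ 0)
    (hx : Pairwise fun i j ↦ x i * x j = 0) (hsum : ∑ i, c i * x i = 0) : x = 0 := by
  funext i
  by_contra hi
  have hother : ∀ j, j ≠ i → x j = 0 := fun j hj ↦
    (mul_eq_zero.mp (hx hj)).resolve_right hi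
  rw [Fintype.sum_eq_single i fun j hj ↦ by rw [hother j hj, mul_zero]] at hsum
  exact mul_ne_zero (hc i) hi hsum

lemma one_add_add_sq_eq_zero_of_isPrimitiveRoot {R : Type*} [CommRing R] [IsDomain R] {ω : R}
    (hω : IsPrimitiveRoot ω 3) : 1 + ω + ω ^ 2 = 0 := by
  simpa [Finset.sum_range_succ] using hω.geom_sum_eq_zero (by norm_num)

lemma ne_zero_of_one_add_add_sq_eq_zero {R : Type*} [Semiring R] [Nontrivial R] {ω : R}
    (hω : 1 + ω + ω ^ 2 = 0) : ω ≠ 0 := by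
  rintro rfl
  simp at hω

/-- The subspace `S` of the theorem, for `ω` in an arbitrary commutative ring. -/
def entangledSpan {R : Type*} [CommRing R] (ω : R) : Submodule R (Matrix (Fin 3) (Fin 4) R) :=
  Submodule.span R
    {!![0,0,0,0; 1,0,0,0; 0,-1,0,0],
      !![1,0,0,0; 0,ω^2,0,0; 0,0,ω,0],
      !![0,1,0,0; 0,0,1,0; 0,0,0,1],
      !![0,1,0,0; 0,0,ω,0; 0,0,0,ω^2],
      !![0,0,1,0; 0,0,0,1; 0,0,0,0],
      !![0,0,0,1; 0,0,0,0; 1,0,0,0]}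

/-- Linear equations satisfied by the matrices of `entangledSpan ω` when `1 + ω + ω² = 0`, one or
two for each class of positions `(i, j)` with the same value of `j - i` modulo `5`. -/
structure HasTwistedDiagonals {R : Type*} [CommRing R] (ω : R)
    (M : Matrix (Fin 3) (Fin 4) R) : Prop where
  apply_one_one : M 1 1 = ω ^ 2 * M 0 0
  apply_two_two : M 2 2 = ω * M 0 0
  superdiagonal : M 0 1 + ω * M 1 2 + ω ^ 2 * M 2 3 = 0
  apply_one_three : M 1 3 = M 0 2
  apply_two_zero : M 2 0 = M 0 3
  apply_two_one : M 2 1 = -M 1 0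

lemma hasTwistedDiagonals_of_mem_entangledSpan {R : Type*} [CommRing R] {ω : R}
    (hω : 1 + ω + ω ^ 2 = 0) {M : Matrix (Fin 3) (Fin 4) R} (hM : M ∈ entangledSpan ω) :
    HasTwistedDiagonals ω M := by
  simp only [entangledSpan, Submodule.mem_span_insert, Submodule.mem_span_singleton] at hM
  obtain ⟨a, _, ⟨b, _, ⟨c, _, ⟨d, _, ⟨e, _, ⟨f, rfl⟩, rfl⟩, rfl⟩, rfl⟩, rfl⟩, rfl⟩ := hM
  constructor
  case superdiagonal =>
    have hsum : c + d + ω * (c + d * ω) + ω ^ 2 * (c + d * ω ^ 2) = 0 := by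
      linear_combination (c + d * (1 - ω + ω ^ 2)) * hω
    simpa using hsum
  all_goals simp [mul_comm]

namespace HasTwistedDiagonals

variable {R : Type*} [CommRing R] [IsDomain R] {ω : R} {M : Matrix (Fin 3) (Fin 4) R}

lemma apply_one_two_eq_zero (h : HasTwistedDiagonals ω M) (h2 : (2 : R) ≠ 0)
    (hω : 1 + ω + ω ^ 2 = 0) (hrank : M.rank ≤ 1) (h00 : M 0 0 ≠ 0) : M 1 2 = 0 := by
  have hminor := mul_eq_mul_of_rank_le_one hrank
  have h01 : M 1 2 = -(ω * M 0 1) := by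
    apply mul_left_cancel₀ h00
    linear_combination hminor 0 1 0 2 + hminor 0 2 1 2 - M 0 1 * h.apply_two_two
      + M 0 2 * h.apply_two_one
  have h23 : M 1 2 = -(ω ^ 2 * M 2 3) := by
    apply mul_left_cancel₀ h00
    linear_combination hminor 0 1 0 2 + hminor 1 2 1 3 - M 2 3 * h.apply_one_one
      + M 2 1 * h.apply_one_three + M 0 2 * h.apply_two_one
  have hmul : 2 * ω ^ 2 * M 1 2 = 0 := by
    linear_combination ω * h.superdiagonal - h01 - ω * h23 + M 1 2 * hω
  have hω0 : ω ≠ 0 := ne_zero_of_one_add_add_sq_eq_zero hω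
  exact (mul_eq_zero.mp hmul).resolve_left (mul_ne_zero h2 (pow_ne_zero 2 hω0))

lemma apply_zero_zero_eq_zero (h : HasTwistedDiagonals ω M) (h2 : (2 : R) ≠ 0)
    (hω : 1 + ω + ω ^ 2 = 0) (hrank : M.rank ≤ 1) : M 0 0 = 0 := by
  by_contra h00
  have h12 : M 1 2 = 0 := h.apply_one_two_eq_zero h2 hω hrank h00
  have hminor : M 1 1 * M 2 2 = 0 := by
    rw [mul_eq_mul_of_rank_le_one hrank 1 2 1 2, h12, zero_mul]
  have hω0 : ω ≠ 0 := ne_zero_of_one_add_add_sq_eq_zero hω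
  rw [h.apply_one_one, h.apply_two_two] at hminor
  exact mul_ne_zero (mul_ne_zero (pow_ne_zero 2 hω0) h00) (mul_ne_zero hω0 h00) hminor

lemma apply_one_zero_eq_zero (h : HasTwistedDiagonals ω M) (hrank : M.rank ≤ 1)
    (h00 : M 0 0 = 0) : M 1 0 = 0 := by
  have hminor := mul_eq_mul_of_rank_le_one hrank 1 2 0 1
  rw [h.apply_two_one, h.apply_one_one, h00] at hminor
  simpa using hminor

lemma apply_zero_three_eq_zero (h : HasTwistedDiagonals ω M) (hrank : M.rank ≤ 1)
    (h00 : M 0 0 = 0) : M 0 3 = 0 := by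
  have hminor := mul_eq_mul_of_rank_le_one hrank 0 2 3 0
  rw [h.apply_two_zero, h00, zero_mul] at hminor
  exact mul_self_eq_zero.mp hminor

lemma apply_zero_two_eq_zero (h : HasTwistedDiagonals ω M) (hrank : M.rank ≤ 1)
    (h03 : M 0 3 = 0) : M 0 2 = 0 := by
  have hminor := mul_eq_mul_of_rank_le_one hrank 0 1 2 3
  rw [h.apply_one_three, h03, zero_mul] at hminor
  exact mul_self_eq_zero.mp hminor

lemma superdiagonal_eq_zero (h : HasTwistedDiagonals ω M) (hω : ω ≠ 0) (hrank : M.rank ≤ 1)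
    (h00 : M 0 0 = 0) (i : Fin 3) : M i i.succ = 0 := by
  have hminor := mul_eq_mul_of_rank_le_one hrank
  have h01 : M 0 1 * M 1 2 = 0 := by rw [hminor, h.apply_one_one, h00, mul_zero, mul_zero]
  have h02 : M 0 1 * M 2 3 = 0 := by
    rw [hminor, h.apply_zero_three_eq_zero hrank h00, zero_mul]
  have h12 : M 1 2 * M 2 3 = 0 := by rw [hminor, h.apply_two_two, h00, mul_zero, mul_zero]
  have hpair : Pairwise fun i j : Fin 3 ↦ M i i.succ * M j j.succ = 0 := by
    intro i j hij
    fin_cases i <;> fin_cases j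
    exacts [absurd rfl hij, h01, h02, (mul_comm _ _).trans h01, absurd rfl hij, h12,
      (mul_comm _ _).trans h02, (mul_comm _ _).trans h12, absurd rfl hij]
  have hsum : ∑ i : Fin 3, ω ^ (i : ℕ) * M i i.succ = 0 := by
    simpa [Fin.sum_univ_three] using h.superdiagonal
  have hcoeff : ∀ j : Fin 3, ω ^ (j : ℕ) ≠ 0 := fun j ↦ pow_ne_zero j hω
  exact congrFun (eq_zero_of_sum_mul_eq_zero_of_pairwise hcoeff hpair hsum) i

theorem eq_zero_of_rank_le_one (h : HasTwistedDiagonals ω M) (h2 : (2 : R) ≠ 0)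
    (hω : 1 + ω + ω ^ 2 = 0) (hrank : M.rank ≤ 1) : M = 0 := by
  have h00 : M 0 0 = 0 := h.apply_zero_zero_eq_zero h2 hω hrank
  have h10 : M 1 0 = 0 := h.apply_one_zero_eq_zero hrank h00
  have h03 : M 0 3 = 0 := h.apply_zero_three_eq_zero hrank h00
  have h02 : M 0 2 = 0 := h.apply_zero_two_eq_zero hrank h03
  have hsuper : ∀ i : Fin 3, M i i.succ = 0 :=
    h.superdiagonal_eq_zero (ne_zero_of_one_add_add_sq_eq_zero hω) hrank h00
  have h01 : M 0 1 = 0 := hsuper 0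
  have h12 : M 1 2 = 0 := hsuper 1
  have h23 : M 2 3 = 0 := hsuper 2
  ext i j
  fin_cases i <;> fin_cases j <;>
    simp [h00, h10, h03, h02, h.apply_one_one, h.apply_two_two, h.apply_one_three,
      h.apply_two_zero, h.apply_two_one, h01, h12, h23]

end HasTwistedDiagonals

theorem stmt5_general {R : Type*} [CommRing R] [IsDomain R] (h2 : (2 : R) ≠ 0) {ω : R}
    (hω : 1 + ω + ω ^ 2 = 0) : ∀ M ∈ entangledSpan ω, M ≠ 0 → ¬ (M.rank ≤ 1) :=
  fun _ hM hne hrank ↦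
    hne ((hasTwistedDiagonals_of_mem_entangledSpan hω hM).eq_zero_of_rank_le_one h2 hω hrank)

/-- with `ω = e^{2πi/3}`, the span `S` of the six given `3 × 4` complex
matrices contains no nonzero matrix of rank at most 1. -/
theorem stmt5 (ω : ℂ) (hω : ω = Complex.exp (2 * Real.pi * Complex.I / 3)) :
    ∀ M ∈ Submodule.span ℂ
      ({!![0,0,0,0; 1,0,0,0; 0,-1,0,0],
        !![1,0,0,0; 0,ω^2,0,0; 0,0,ω,0],
        !![0,1,0,0; 0,0,1,0; 0,0,0,1],
        !![0,1,0,0; 0,0,ω,0; 0,0,0,ω^2],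
        !![0,0,1,0; 0,0,0,1; 0,0,0,0],
        !![0,0,0,1; 0,0,0,0; 1,0,0,0]} : Set (Matrix (Fin 3) (Fin 4) ℂ)),
      M ≠ 0 → ¬ (M.rank ≤ 1) := by
  have hprim : IsPrimitiveRoot ω 3 := hω ▸ Complex.isPrimitiveRoot_exp 3 three_ne_zero
  exact stmt5_general two_ne_zero (one_add_add_sq_eq_zero_of_isPrimitiveRoot hprim)
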